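/- Let n ≥ 2 and 1 ≤ k ≤ n−1 be integers and let a_1,…,a_n > 1 be real numbers. Then in the formal power series ring ℝ[[t_1,…,t_n]] one has I*(a_1:⋯:a_k:1 | t_1,…,t_k) · I*(a_{k+1}:⋯:a_n:1 | t_{k+1},…,t_n) = Σ_{σ ∈ Σ_{k,n−k}} I*(a_{σ(1)}:⋯:a_{σ(n)}:1 | t_{σ(1)},…,t_{σ(n)}), where for a permutation σ the term I*(a_{σ(1)}:⋯:a_{σ(n)}:1 | t_{σ(1)},…,t_{σ(n)}) means the series Σ_{n_1,…,n_n ≥ 1} I_{n_1,…,n_n}(a_{σ(1)}:⋯:a_{σ(n)}:1) · u_1^{n_1−1}⋯u_n^{n_n−1} with u_j := t_{σ(1)}+⋯+t_{σ(j)}. -/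

import Mathlib

open MeasureTheory

/-- The set of `(k, n−k)`-shuffles: permutations `σ` of `{0,…,n−1}` such that
`σ⁻¹` is increasing on the first `k` letters and on the last `n−k` letters. -/
def shuffles (n k : ℕ) : Finset (Equiv.Perm (Fin n)) :=
  Finset.univ.filter fun σ =>
    (∀ i j : Fin n, (i : ℕ) < (j : ℕ) → (j : ℕ) < k → σ⁻¹ i < σ⁻¹ j) ∧
    (∀ i j : Fin n, (i : ℕ) < (j : ℕ) → k ≤ (i : ℕ) → σ⁻¹ i < σ⁻¹ j)

/-- The iterated integral `I_{n_1,…,n_p}(b_1:⋯:b_p:1)`: the Lebesgue integral over the open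
simplex `{0<t_1<⋯<t_w<1}` (`w = n_1+⋯+n_p`) of `∏_j f_j(t_j)`, where `f_j(t) = 1/(b_i−t)`
if `j` is the first slot of the `i`-th block and `f_j(t) = 1/t` otherwise. -/
noncomputable def iterInt {p : ℕ} (b : Fin p → ℝ) (n : Fin p → ℕ) : ℝ :=
  ∫ t in {t : Fin (∑ i, n i) → ℝ | StrictMono t ∧ ∀ j, t j ∈ Set.Ioo (0 : ℝ) 1},
    ∏ j : Fin (∑ i, n i), (if h : ∃ i : Fin p,
            (j : ℕ) = ∑ r ∈ Finset.univ.filter (fun r : Fin p => r < i), n r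
          then (b h.choose - t j)⁻¹ else (t j)⁻¹)

/-- The generating series `I*`, as a formal power series in the variables `t_1,…,t_N`:
`Σ_{n_1,…,n_p ≥ 1} I_{n_1,…,n_p}(b_1:⋯:b_p:1) · u_1^{n_1−1}⋯u_p^{n_p−1}`, where
`u_j = t_{idx 1} + ⋯ + t_{idx j}`.  Its coefficient at a monomial `d` is the (finitely
supported, hence summable) sum over all exponent tuples `ν` (`n_j = ν_j + 1`). -/
noncomputable def Istar (N p : ℕ) (idx : Fin p → Fin N) (b : Fin p → ℝ) :
    MvPowerSeries (Fin N) ℝ :=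
  fun d => ∑' ν : Fin p → ℕ, iterInt b (fun i => ν i + 1) *
    MvPolynomial.coeff d
      (∏ j : Fin p,
        (∑ i ∈ Finset.univ.filter (fun i : Fin p => i ≤ j),
          MvPolynomial.X (idx i) : MvPolynomial (Fin N) ℝ) ^ (ν j))

/-- The open simplex `0 < t_1 < ⋯ < t_n < x`. -/
def openSimplex (n : ℕ) (x : ℝ) : Set (Fin n → ℝ) :=
  {t | StrictMono t ∧ ∀ j, t j ∈ Set.Ioo (0 : ℝ) x}

/-- The iterated integral of `G 0, …, G (n - 1)` from `0` to `x`, integrating one variable at a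
time. -/
noncomputable def iterLIntegral (G : ℕ → ℝ → ENNReal) : ℕ → ℝ → ENNReal
  | 0, _ => 1
  | n + 1, x => ∫⁻ t in Set.Ioo 0 x, G n t * iterLIntegral G n t

lemma measurableSet_openSimplex (n : ℕ) (x : ℝ) : MeasurableSet (openSimplex n x) := by
  have h : openSimplex n x = (⋂ (i : Fin n) (j : Fin n) (_ : i < j), {t | t i < t j}) ∩
      ⋂ j : Fin n, {t | t j ∈ Set.Ioo (0 : ℝ) x} := by
    ext t
    simp [openSimplex, StrictMono]
  rw [h]
  refine MeasurableSet.inter ?_ ?_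
  · exact MeasurableSet.iInter fun i => MeasurableSet.iInter fun j => MeasurableSet.iInter fun _ =>
      measurableSet_lt (measurable_pi_apply i) (measurable_pi_apply j)
  · exact MeasurableSet.iInter fun j => measurable_pi_apply j measurableSet_Ioo

lemma strictMono_snoc_iff {n : ℕ} (t : Fin n → ℝ) (s : ℝ) :
    StrictMono (Fin.snoc t s : Fin (n + 1) → ℝ) ↔ StrictMono t ∧ ∀ j, t j < s := by
  constructor
  · intro h
    refine ⟨fun i j hij => ?_, fun j => ?_⟩
    · simpa using h (Fin.castSucc_lt_castSucc_iff.2 hij)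
    · simpa using h (Fin.castSucc_lt_last j)
  · rintro ⟨h1, h2⟩ i j hij
    induction j using Fin.lastCases with
    | last =>
      induction i using Fin.lastCases with
      | last => exact absurd hij (lt_irrefl _)
      | cast i => simpa using h2 i
    | cast j =>
      induction i using Fin.lastCases with
      | last => exact absurd hij (not_lt.2 (Fin.le_last _))
      | cast i => simpa using h1 (Fin.castSucc_lt_castSucc_iff.1 hij)

lemma snoc_mem_openSimplex {n : ℕ} (x : ℝ) (t : Fin n → ℝ) (s : ℝ) :
    (Fin.snoc t s : Fin (n + 1) → ℝ) ∈ openSimplex (n + 1) x ↔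
      s ∈ Set.Ioo 0 x ∧ t ∈ openSimplex n s := by
  simp only [openSimplex, Set.mem_ofPred_eq, strictMono_snoc_iff, Fin.forall_fin_succ',
    Fin.snoc_castSucc, Fin.snoc_last, Set.mem_Ioo]
  constructor
  · rintro ⟨⟨h1, h2⟩, h3, h4⟩
    exact ⟨h4, h1, fun j => ⟨(h3 j).1, h2 j⟩⟩
  · rintro ⟨h1, h2, h3⟩
    exact ⟨⟨h2, fun j => (h3 j).2⟩, fun j => ⟨(h3 j).1, (h3 j).2.trans h1.2⟩, h1⟩

/-- Integrating over the last variable of the simplex last. -/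
lemma lintegral_openSimplex_succ {n : ℕ} (x : ℝ) {F : (Fin (n + 1) → ℝ) → ENNReal}
    (hF : Measurable F) :
    ∫⁻ t in openSimplex (n + 1) x, F t =
      ∫⁻ s in Set.Ioo 0 x, ∫⁻ t in openSimplex n s, F (Fin.snoc t s) := by
  have hmp := (volume_preserving_piFinSuccAbove (fun _ : Fin (n + 1) => ℝ) (Fin.last n)).symm
  have hind : Measurable ((openSimplex (n + 1) x).indicator F) :=
    hF.indicator (measurableSet_openSimplex _ _)
  rw [← lintegral_indicator (measurableSet_openSimplex _ _), ← hmp.lintegral_comp hind]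
  rw [Measure.volume_eq_prod,
    lintegral_prod _ (Measurable.aemeasurable (by exact hind.comp hmp.measurable)),
    ← lintegral_indicator measurableSet_Ioo]
  refine lintegral_congr fun s => ?_
  have hsnoc : ∀ t : Fin n → ℝ, (MeasurableEquiv.piFinSuccAbove (fun _ : Fin (n + 1) => ℝ)
      (Fin.last n)).symm (s, t) = (Fin.snoc t s : Fin (n + 1) → ℝ) := fun t => by
    simp [MeasurableEquiv.piFinSuccAbove_symm_apply, Fin.insertNthEquiv, Fin.insertNth_last']
  by_cases hs : s ∈ Set.Ioo 0 x
  · rw [Set.indicator_of_mem hs]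
    refine Eq.trans ?_ (lintegral_indicator (measurableSet_openSimplex n s) _)
    refine lintegral_congr fun t => ?_
    rw [hsnoc]
    by_cases ht : t ∈ openSimplex n s
    · rw [Set.indicator_of_mem ht, Set.indicator_of_mem ((snoc_mem_openSimplex x t s).2 ⟨hs, ht⟩)]
    · rw [Set.indicator_of_notMem ht,
        Set.indicator_of_notMem fun h => ht ((snoc_mem_openSimplex x t s).1 h).2]
  · rw [Set.indicator_of_notMem hs]
    refine (lintegral_congr fun t => ?_).trans lintegral_zero
    rw [hsnoc, Set.indicator_of_notMem]
    rw [snoc_mem_openSimplex]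
    exact fun h => hs h.1

lemma measurable_iterLIntegral {G : ℕ → ℝ → ENNReal} (hG : ∀ j, Measurable (G j)) (n : ℕ) :
    Measurable (iterLIntegral G n) := by
  induction n with
  | zero => exact measurable_const
  | succ n ih =>
    have h : iterLIntegral G (n + 1) = fun x => ∫⁻ t,
        {q : ℝ × ℝ | q.2 ∈ Set.Ioo 0 q.1}.indicator
          (fun q => G n q.2 * iterLIntegral G n q.2) (x, t) := by
      funext x
      rw [iterLIntegral, ← lintegral_indicator measurableSet_Ioo]
      rfl
    rw [h]
    refine Measurable.lintegral_prod_right' (f := {q : ℝ × ℝ | q.2 ∈ Set.Ioo 0 q.1}.indicator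
          (fun q => G n q.2 * iterLIntegral G n q.2)) ?_
    refine Measurable.indicator (((hG n).comp measurable_snd).mul (ih.comp measurable_snd)) ?_
    exact (measurableSet_lt measurable_const measurable_snd).inter
      (measurableSet_lt measurable_snd measurable_fst)

lemma lintegral_openSimplex_zero (x : ℝ) (F : (Fin 0 → ℝ) → ENNReal) :
    ∫⁻ t in openSimplex 0 x, F t = F Fin.elim0 := by
  have h : openSimplex 0 x = Set.univ := by
    ext t
    simp [openSimplex, Subsingleton.strictMono]
  rw [h, Measure.restrict_univ, lintegral_unique, volume_pi, Measure.pi_of_empty]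
  simpa using congrArg F (Subsingleton.elim _ _)

lemma lintegral_openSimplex_prod {G : ℕ → ℝ → ENNReal} (hG : ∀ j, Measurable (G j)) (n : ℕ)
    (x : ℝ) : ∫⁻ t in openSimplex n x, ∏ j : Fin n, G j (t j) = iterLIntegral G n x := by
  have hmeas : ∀ m : ℕ, Measurable fun t : Fin m → ℝ => ∏ j : Fin m, G j (t j) := fun m =>
    Finset.measurable_fun_prod _ fun j _ => (hG j).comp (measurable_pi_apply j)
  induction n generalizing x with
  | zero => rw [lintegral_openSimplex_zero, iterLIntegral, Fin.prod_univ_zero]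
  | succ n ih =>
    rw [lintegral_openSimplex_succ x (hmeas _), iterLIntegral]
    refine lintegral_congr fun s => ?_
    simp only [Fin.prod_univ_castSucc, Fin.snoc_castSucc, Fin.snoc_last, Fin.val_castSucc,
      Fin.val_last]
    rw [lintegral_mul_const _ (hmeas _), ih, mul_comm]

lemma iterLIntegral_congr {G G' : ℕ → ℝ → ENNReal} (n : ℕ) (h : ∀ j < n, G j = G' j) :
    iterLIntegral G n = iterLIntegral G' n := by
  induction n with
  | zero => rfl
  | succ n ih =>
    funext x
    rw [iterLIntegral, iterLIntegral, h n n.lt_succ_self,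
      ih fun j hj => h j (hj.trans n.lt_succ_self)]

/-- The density of `m` successive integrations of `1 / t` between `s` and `x`. -/
noncomputable def logKernel (m : ℕ) (s x : ℝ) : ℝ := (Real.log x - Real.log s) ^ m / m.factorial

lemma logKernel_nonneg (m : ℕ) {s x : ℝ} (hs : 0 < s) (hsx : s ≤ x) : 0 ≤ logKernel m s x :=
  div_nonneg (pow_nonneg (sub_nonneg.2 (Real.log_le_log hs hsx)) _) (Nat.cast_nonneg _)

lemma measurable_logKernel (m : ℕ) : Measurable fun q : ℝ × ℝ => logKernel m q.1 q.2 :=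
  (((Real.measurable_log.comp measurable_snd).sub
    (Real.measurable_log.comp measurable_fst)).pow_const m).div_const _

lemma lintegral_inv_mul_logKernel (m : ℕ) {s x : ℝ} (hs : 0 < s) (hsx : s < x) :
    ∫⁻ t in Set.Ioo s x, ENNReal.ofReal t⁻¹ * ENNReal.ofReal (logKernel m s t) =
      ENNReal.ofReal (logKernel (m + 1) s x) := by
  have hcont : ContinuousOn (fun t => t⁻¹ * logKernel m s t) (Set.Icc s x) := by
    intro t ht
    have ht0 : t ≠ 0 := (hs.trans_le ht.1).ne'
    unfold logKernel
    refine ContinuousAt.continuousWithinAt ?_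
    fun_prop (disch := assumption)
  have hint : ∫ t in s..x, t⁻¹ * logKernel m s t = logKernel (m + 1) s x := by
    rw [intervalIntegral.integral_eq_sub_of_hasDerivAt (f := fun t => logKernel (m + 1) s t)]
    · simp [logKernel]
    · intro t ht
      rw [Set.uIcc_of_le hsx.le] at ht
      have ht0 : t ≠ 0 := (hs.trans_le ht.1).ne'
      unfold logKernel
      have h := ((((Real.hasDerivAt_log ht0).sub_const (Real.log s)).pow (m + 1)).div_const
        ((m + 1).factorial : ℝ))
      refine h.congr_deriv ?_
      rw [Nat.factorial_succ]
      have hm : (m : ℝ) + 1 ≠ 0 := by positivity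
      have hf : (m.factorial : ℝ) ≠ 0 := by positivity
      push_cast
      field_simp
    · exact ContinuousOn.intervalIntegrable (by rwa [Set.uIcc_of_le hsx.le])
  rw [← hint, intervalIntegral.integral_of_le hsx.le, integral_Ioc_eq_integral_Ioo,
    ofReal_integral_eq_lintegral_ofReal]
  · refine setLIntegral_congr_fun measurableSet_Ioo fun t ht => ?_
    exact (ENNReal.ofReal_mul (inv_nonneg.2 (hs.trans ht.1).le)).symm
  · exact (hcont.integrableOn_Icc).mono_set Set.Ioo_subset_Icc_self
  · refine (ae_restrict_mem measurableSet_Ioo).mono fun t ht => ?_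
    exact mul_nonneg (inv_nonneg.2 (hs.trans ht.1).le) (logKernel_nonneg m hs ht.1.le)

/-- Collapsing a block of `m` factors `1 / t` into a single kernel. -/
lemma iterLIntegral_block {G : ℕ → ℝ → ENNReal} (hG : ∀ j, Measurable (G j)) (w m : ℕ)
    (hm : ∀ i < m, G (w + 1 + i) = fun t => ENNReal.ofReal t⁻¹) (x : ℝ) :
    iterLIntegral G (w + 1 + m) x =
      ∫⁻ s in Set.Ioo 0 x, ENNReal.ofReal (logKernel m s x) * (G w s * iterLIntegral G w s) := by
  induction m generalizing x with
  | zero => simp [iterLIntegral, logKernel]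
  | succ m ih =>
    have hmeas : Measurable fun s => G w s * iterLIntegral G w s :=
      (hG w).mul (measurable_iterLIntegral hG w)
    rw [← add_assoc, iterLIntegral, hm m m.lt_succ_self]
    simp_rw [ih fun i hi => hm i (hi.trans m.lt_succ_self)]
    set f : ℝ × ℝ → ENNReal := {q : ℝ × ℝ | 0 < q.2 ∧ q.2 < q.1 ∧ q.1 < x}.indicator fun q =>
      ENNReal.ofReal q.1⁻¹ * (ENNReal.ofReal (logKernel m q.2 q.1) *
        (G w q.2 * iterLIntegral G w q.2)) with hf
    have hfm : Measurable f := by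
      refine Measurable.indicator ?_ ?_
      · exact (measurable_fst.inv.ennreal_ofReal).mul
          ((((measurable_logKernel m).comp measurable_swap).ennreal_ofReal).mul
            (hmeas.comp measurable_snd))
      · exact (measurableSet_lt measurable_const measurable_snd).inter
          ((measurableSet_lt measurable_snd measurable_fst).inter
            (measurableSet_lt measurable_fst measurable_const))
    have h1 : ∫⁻ t in Set.Ioo 0 x, ENNReal.ofReal t⁻¹ * ∫⁻ s in Set.Ioo 0 t,
        ENNReal.ofReal (logKernel m s t) * (G w s * iterLIntegral G w s) =
        ∫⁻ t, ∫⁻ s, f (t, s) := by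
      rw [← lintegral_indicator measurableSet_Ioo]
      refine lintegral_congr fun t => ?_
      by_cases ht : t ∈ Set.Ioo 0 x
      · rw [Set.indicator_of_mem ht, ← lintegral_indicator measurableSet_Ioo,
          ← lintegral_const_mul']
        · refine lintegral_congr fun s => ?_
          simp only [hf, Set.indicator, Set.mem_Ioo, Set.mem_ofPred_eq, ht.2, and_true, mul_ite,
            mul_zero]
        · exact ENNReal.ofReal_ne_top
      · rw [Set.indicator_of_notMem ht]
        refine ((lintegral_congr fun s => ?_).trans lintegral_zero).symm
        exact Set.indicator_of_notMem (fun h => ht ⟨h.1.trans h.2.1, h.2.2⟩) _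
    rw [h1, lintegral_lintegral_swap (f := fun t s => f (t, s)) hfm.aemeasurable,
      ← lintegral_indicator measurableSet_Ioo]
    refine lintegral_congr fun s => ?_
    by_cases hs : s ∈ Set.Ioo 0 x
    · rw [Set.indicator_of_mem hs, ← lintegral_inv_mul_logKernel m hs.1 hs.2,
        ← lintegral_mul_const, ← lintegral_indicator measurableSet_Ioo]
      · refine lintegral_congr fun t => ?_
        simp only [hf, Set.indicator, Set.mem_Ioo, Set.mem_ofPred_eq, hs.1, true_and, mul_assoc]
      · exact (measurable_inv.ennreal_ofReal).mul
          (((measurable_logKernel m).comp measurable_prodMk_left).ennreal_ofReal)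
    · rw [Set.indicator_of_notMem hs]
      refine (lintegral_congr fun t => ?_).trans lintegral_zero
      exact Set.indicator_of_notMem (fun h => hs ⟨h.1, h.2.1.trans h.2.2⟩) _

/-- The `j`-th function under the integral sign in `iterInt b n`. -/
noncomputable def letter {p : ℕ} (b : Fin p → ℝ) (n : Fin p → ℕ) (j : ℕ) (t : ℝ) : ℝ :=
  if h : ∃ i : Fin p, j = ∑ r ∈ Finset.univ.filter (fun r : Fin p => r < i), n r
    then (b h.choose - t)⁻¹ else t⁻¹

lemma letter_of_not_exists {p : ℕ} {b : Fin p → ℝ} {n : Fin p → ℕ} {j : ℕ}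
    (h : ¬ ∃ i : Fin p, j = ∑ r ∈ Finset.univ.filter (fun r : Fin p => r < i), n r) (t : ℝ) :
    letter b n j t = t⁻¹ := by
  rw [letter, dif_neg h]

lemma letter_blockStart {p : ℕ} (b : Fin p → ℝ) {n : Fin p → ℕ} (hn : ∀ i, 0 < n i) (i : Fin p)
    (t : ℝ) :
    letter b n (∑ r ∈ Finset.univ.filter (fun r : Fin p => r < i), n r) t = (b i - t)⁻¹ := by
  have hmono : StrictMono fun i : Fin p =>
      ∑ r ∈ Finset.univ.filter (fun r : Fin p => r < i), n r := by
    intro i i' hii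
    refine Finset.sum_lt_sum_of_subset (i := i) ?_ ?_ ?_ (hn i) fun _ _ _ => Nat.zero_le _
    · intro r hr
      simp only [Finset.mem_filter, Finset.mem_univ, true_and] at hr ⊢
      exact hr.trans hii
    · simpa using hii
    · simp
  have h : ∃ i' : Fin p, (∑ r ∈ Finset.univ.filter (fun r : Fin p => r < i), n r) =
      ∑ r ∈ Finset.univ.filter (fun r : Fin p => r < i'), n r := ⟨i, rfl⟩
  rw [letter, dif_pos h, ← hmono.injective h.choose_spec]

lemma measurable_letter {p : ℕ} (b : Fin p → ℝ) (n : Fin p → ℕ) (j : ℕ) :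
    Measurable (letter b n j) := by
  by_cases h : ∃ i : Fin p, j = ∑ r ∈ Finset.univ.filter (fun r : Fin p => r < i), n r
  · have : letter b n j = fun t => (b h.choose - t)⁻¹ := funext fun t => by rw [letter, dif_pos h]
    rw [this]
    fun_prop
  · have : letter b n j = fun t => t⁻¹ := funext fun t => letter_of_not_exists h t
    rw [this]
    fun_prop

lemma letter_nonneg {p : ℕ} {b : Fin p → ℝ} (hb : ∀ i, 1 < b i) (n : Fin p → ℕ) (j : ℕ) {t : ℝ}
    (ht : t ∈ Set.Ioo (0 : ℝ) 1) : 0 ≤ letter b n j t := by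
  unfold letter
  split_ifs with h
  · exact inv_nonneg.2 (sub_nonneg.2 (ht.2.trans (hb _)).le)
  · exact inv_nonneg.2 ht.1.le

lemma sum_filter_lt_castSucc {p : ℕ} (n : Fin (p + 1) → ℕ) (i : Fin p) :
    ∑ r ∈ Finset.univ.filter (fun r : Fin (p + 1) => r < i.castSucc), n r =
      ∑ r ∈ Finset.univ.filter (fun r : Fin p => r < i), n r.castSucc := by
  simp [Finset.sum_filter, Fin.sum_univ_castSucc, not_lt.2 (Fin.le_last i.castSucc)]

lemma sum_filter_lt_last {p : ℕ} (n : Fin (p + 1) → ℕ) :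
    ∑ r ∈ Finset.univ.filter (fun r : Fin (p + 1) => r < Fin.last p), n r =
      ∑ r : Fin p, n r.castSucc := by
  simp [Finset.sum_filter, Fin.sum_univ_castSucc, Fin.castSucc_lt_last]

lemma letter_castSucc {p : ℕ} (b : Fin (p + 1) → ℝ) {n : Fin (p + 1) → ℕ} (hn : ∀ i, 0 < n i)
    {j : ℕ} (hj : j < ∑ r : Fin p, n r.castSucc) :
    letter b n j = letter (fun i => b i.castSucc) (fun i => n i.castSucc) j := by
  funext t
  by_cases h : ∃ i : Fin p, j = ∑ r ∈ Finset.univ.filter (fun r : Fin p => r < i), n r.castSucc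
  · obtain ⟨i, rfl⟩ := h
    rw [letter_blockStart (fun i => b i.castSucc) (n := fun i => n i.castSucc) (fun i => hn _) i,
      ← sum_filter_lt_castSucc, letter_blockStart b hn]
  · rw [letter_of_not_exists h, letter_of_not_exists]
    rintro ⟨i, hi⟩
    induction i using Fin.lastCases with
    | last =>
      rw [sum_filter_lt_last] at hi
      exact hj.ne hi
    | cast i => exact h ⟨i, hi.trans (sum_filter_lt_castSucc n i)⟩

lemma letter_after_last {p : ℕ} (b : Fin (p + 1) → ℝ) (n : Fin (p + 1) → ℕ) (i : ℕ) :
    letter b n (∑ r : Fin p, n r.castSucc + 1 + i) = fun t => t⁻¹ := by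
  funext t
  refine letter_of_not_exists ?_ t
  rintro ⟨q, hq⟩
  have h : ∑ r ∈ Finset.univ.filter (fun r : Fin (p + 1) => r < q), n r ≤
      ∑ r ∈ Finset.univ.filter (fun r : Fin (p + 1) => r < Fin.last p), n r := by
    refine Finset.sum_le_sum_of_subset fun r hr => ?_
    simp only [Finset.mem_filter, Finset.mem_univ, true_and] at hr ⊢
    exact hr.trans_le (Fin.le_last q)
  rw [sum_filter_lt_last] at h
  omega

lemma measurable_snoc_apply {p : ℕ} (x : ℝ) (i : Fin (p + 1)) :
    Measurable fun s : Fin p → ℝ => (Fin.snoc s x : Fin (p + 1) → ℝ) i := by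
  induction i using Fin.lastCases with
  | last => simp
  | cast i => simpa using measurable_pi_apply i

/-- The integrand of `I_{ν + 1}(b : x)` after the variables carrying `1 / t` are integrated out. -/
noncomputable def blockIntegrand {p : ℕ} (b : Fin p → ℝ) (ν : Fin p → ℕ) (x : ℝ)
    (s : Fin p → ℝ) : ℝ :=
  ∏ i, (b i - s i)⁻¹ * logKernel (ν i) (s i) ((Fin.snoc s x : Fin (p + 1) → ℝ) i.succ)

lemma measurable_blockFactor {p : ℕ} (b : Fin p → ℝ) (ν : Fin p → ℕ) (x : ℝ) (i : Fin p) :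
    Measurable fun s : Fin p → ℝ =>
      (b i - s i)⁻¹ * logKernel (ν i) (s i) ((Fin.snoc s x : Fin (p + 1) → ℝ) i.succ) :=
  (measurable_const.sub (measurable_pi_apply i)).inv.mul
    ((measurable_logKernel (ν i)).comp ((measurable_pi_apply i).prodMk (measurable_snoc_apply x _)))

lemma lintegral_blockIntegrand {p : ℕ} (b : Fin p → ℝ) (ν : Fin p → ℕ) (x : ℝ) :
    ∫⁻ s in openSimplex p x, ∏ i, ENNReal.ofReal ((b i - s i)⁻¹ *
        logKernel (ν i) (s i) ((Fin.snoc s x : Fin (p + 1) → ℝ) i.succ)) =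
      iterLIntegral (fun j t => ENNReal.ofReal (letter b (fun i => ν i + 1) j t))
        (∑ i, (ν i + 1)) x := by
  induction p generalizing x with
  | zero => rw [lintegral_openSimplex_zero, Fin.prod_univ_zero, Fin.sum_univ_zero, iterLIntegral]
  | succ p ih =>
    have hn : ∀ i, 0 < ν i + 1 := fun i => Nat.succ_pos _
    rw [lintegral_openSimplex_succ x (Finset.measurable_fun_prod _ fun i _ =>
      (measurable_blockFactor b ν x i).ennreal_ofReal)]
    have hsum : ∑ i, (ν i + 1) = (∑ i : Fin p, (ν i.castSucc + 1)) + 1 + ν (Fin.last p) := by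
      rw [Fin.sum_univ_castSucc]
      ring
    rw [hsum, iterLIntegral_block (fun j => (measurable_letter b _ j).ennreal_ofReal) _ _
      fun i _ => by
        rw [letter_after_last b (fun i => ν i + 1) i]]
    refine setLIntegral_congr_fun measurableSet_Ioo fun s hs => ?_
    have hlast : letter b (fun i => ν i + 1) (∑ i : Fin p, (ν i.castSucc + 1)) s =
        (b (Fin.last p) - s)⁻¹ := by
      rw [← sum_filter_lt_last (fun i => ν i + 1)]
      exact letter_blockStart b hn _ s
    have hcongr : iterLIntegral (fun j t => ENNReal.ofReal (letter b (fun i => ν i + 1) j t))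
        (∑ i : Fin p, (ν i.castSucc + 1)) = iterLIntegral (fun j t => ENNReal.ofReal
          (letter (fun i => b i.castSucc) (fun i => ν i.castSucc + 1) j t))
        (∑ i : Fin p, (ν i.castSucc + 1)) :=
      iterLIntegral_congr _ fun j hj => by rw [letter_castSucc b hn hj]
    simp only [Fin.prod_univ_castSucc, Fin.snoc_castSucc, Fin.snoc_last, Fin.succ_castSucc,
      Fin.succ_last]
    rw [hlast, hcongr, ← ih, lintegral_mul_const, mul_comm,
      mul_comm (b (Fin.last p) - s)⁻¹, ENNReal.ofReal_mul (logKernel_nonneg _ hs.1 hs.2.le),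
      mul_assoc]
    exact Finset.measurable_fun_prod _ fun i _ => (measurable_blockFactor
      (fun i => b i.castSucc) (fun i => ν i.castSucc) s i).ennreal_ofReal

lemma blockFactor_nonneg {p : ℕ} {b : Fin p → ℝ} (hb : ∀ i, 1 < b i) (ν : Fin p → ℕ)
    {s : Fin p → ℝ} (hs : s ∈ openSimplex p 1) (i : Fin p) :
    0 ≤ (b i - s i)⁻¹ * logKernel (ν i) (s i) ((Fin.snoc s 1 : Fin (p + 1) → ℝ) i.succ) := by
  have hmono := (strictMono_snoc_iff s 1).2 ⟨hs.1, fun j => (hs.2 j).2⟩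
  have hlt := hmono (Fin.castSucc_lt_succ (i := i))
  rw [Fin.snoc_castSucc] at hlt
  exact mul_nonneg (inv_nonneg.2 (sub_nonneg.2 ((hs.2 i).2.trans (hb i)).le))
    (logKernel_nonneg _ (hs.2 i).1 hlt.le)

lemma iterInt_eq_integral_blockIntegrand {p : ℕ} {b : Fin p → ℝ} (hb : ∀ i, 1 < b i)
    (ν : Fin p → ℕ) :
    iterInt b (fun i => ν i + 1) = ∫ s in openSimplex p 1, blockIntegrand b ν 1 s := by
  have h1 : iterInt b (fun i => ν i + 1) = ∫ t in openSimplex (∑ i, (ν i + 1)) 1,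
      ∏ j : Fin (∑ i, (ν i + 1)), letter b (fun i => ν i + 1) j (t j) := rfl
  rw [h1, integral_eq_lintegral_of_nonneg_ae, integral_eq_lintegral_of_nonneg_ae]
  · congr 1
    calc _ = ∫⁻ t in openSimplex (∑ i, (ν i + 1)) 1,
          ∏ j : Fin (∑ i, (ν i + 1)), ENNReal.ofReal (letter b (fun i => ν i + 1) j (t j)) :=
        setLIntegral_congr_fun (measurableSet_openSimplex _ _) fun t ht =>
          ENNReal.ofReal_prod_of_nonneg fun j _ => letter_nonneg hb _ _ (ht.2 j)
      _ = _ := lintegral_openSimplex_prod (fun j => (measurable_letter b _ j).ennreal_ofReal) _ _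
      _ = _ := (lintegral_blockIntegrand b ν 1).symm
      _ = _ := setLIntegral_congr_fun (measurableSet_openSimplex _ _) fun s hs =>
          (ENNReal.ofReal_prod_of_nonneg fun i _ => blockFactor_nonneg hb ν hs i).symm
  · exact (ae_restrict_mem (measurableSet_openSimplex _ _)).mono fun s hs =>
      Finset.prod_nonneg fun i _ => blockFactor_nonneg hb ν hs i
  · exact (Finset.measurable_fun_prod _ fun i _ =>
      measurable_blockFactor b ν 1 i).aestronglyMeasurable
  · exact (ae_restrict_mem (measurableSet_openSimplex _ _)).mono fun t ht =>
      Finset.prod_nonneg fun j _ => letter_nonneg hb _ _ (ht.2 j)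
  · exact (Finset.measurable_fun_prod _ fun (j : Fin (∑ i, (ν i + 1))) _ =>
      (measurable_letter b _ j).comp (measurable_pi_apply j)).aestronglyMeasurable

/-- The exponential of a linear form, as a formal power series. -/
noncomputable def expLinear {ι : Type*} (A : MvPolynomial ι ℝ) : MvPowerSeries ι ℝ :=
  fun d => MvPolynomial.coeff d (A ^ d.degree) / d.degree.factorial

lemma coeff_pow_eq_zero {ι : Type*} {A : MvPolynomial ι ℝ} (hA : A.IsHomogeneous 1) {m : ℕ}
    {d : ι →₀ ℕ} (hd : d.degree ≠ m) : MvPolynomial.coeff d (A ^ m) = 0 :=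
  MvPolynomial.IsHomogeneous.coeff_eq_zero (by simpa using hA.pow m) hd

lemma expLinear_add_apply {ι : Type*} [DecidableEq ι] {A B : MvPolynomial ι ℝ}
    (hA : A.IsHomogeneous 1) (hB : B.IsHomogeneous 1) (d : ι →₀ ℕ) :
    expLinear (A + B) d =
      ∑ e ∈ Finset.HasAntidiagonal.antidiagonal d, expLinear A e.1 * expLinear B e.2 := by
  unfold expLinear
  rw [(Commute.all A B).add_pow', MvPolynomial.coeff_sum, Finset.sum_div]
  simp_rw [MvPolynomial.coeff_smul, MvPolynomial.coeff_mul, Finset.smul_sum, Finset.sum_div]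
  rw [Finset.sum_comm]
  refine Finset.sum_congr rfl fun e he => ?_
  have hdeg : e.1.degree + e.2.degree = d.degree := by
    rw [← Finset.HasAntidiagonal.mem_antidiagonal.1 he, map_add]
  rw [Finset.sum_eq_single (e.1.degree, e.2.degree)]
  · rw [← hdeg, nsmul_eq_mul, Nat.cast_add_choose]
    have h0 : ((e.1.degree + e.2.degree).factorial : ℝ) ≠ 0 := by positivity
    field_simp
  · rintro ⟨i, j⟩ hij hne
    by_cases hi : e.1.degree = i
    · have hj : e.2.degree ≠ j := by
        rintro rfl
        exact hne (by rw [hi])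
      simp [coeff_pow_eq_zero hB hj]
    · simp [coeff_pow_eq_zero hA hi]
  · intro h
    exact absurd (Finset.HasAntidiagonal.mem_antidiagonal.2 hdeg) h

lemma sum_piAntidiag_coeff {ι : Type*} {p : ℕ} (L : Fin p → ℝ) (u : Fin p → MvPolynomial ι ℝ)
    (d : ι →₀ ℕ) (m : ℕ) :
    ∑ ν ∈ Finset.piAntidiag Finset.univ m, (∏ i, L i ^ ν i / (ν i).factorial) *
        MvPolynomial.coeff d (∏ i, u i ^ ν i) =
      MvPolynomial.coeff d ((∑ i, MvPolynomial.C (L i) * u i) ^ m) / m.factorial := by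
  rw [Finset.sum_pow_eq_sum_piAntidiag, MvPolynomial.coeff_sum, Finset.sum_div]
  refine Finset.sum_congr rfl fun ν hν => ?_
  have hm : ∑ i, ν i = m := (Finset.mem_piAntidiag.1 hν).1
  have hspec : (∏ i, ((ν i).factorial : ℝ)) * Nat.multinomial Finset.univ ν = m.factorial := by
    rw [← hm]
    exact_mod_cast Nat.multinomial_spec Finset.univ ν
  have h0 : (∏ i, ((ν i).factorial : ℝ)) ≠ 0 := Finset.prod_ne_zero_iff.2 fun i _ => by positivity
  have hm0 : (Nat.multinomial Finset.univ ν : ℝ) ≠ 0 := by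
    intro h
    rw [h, mul_zero] at hspec
    exact absurd hspec.symm (by positivity)
  simp_rw [mul_pow, Finset.prod_mul_distrib, ← map_pow, ← map_prod]
  rw [← map_natCast (MvPolynomial.C (σ := ι) (R := ℝ)), MvPolynomial.coeff_C_mul,
    MvPolynomial.coeff_C_mul, ← hspec, Finset.prod_div_distrib]
  field_simp

lemma sum_filter_le_sub {p : ℕ} (v : Fin (p + 1) → ℝ) (i : Fin p) :
    ∑ j ∈ Finset.univ.filter (fun j : Fin p => i ≤ j), (v j.succ - v j.castSucc) =
      v (Fin.last p) - v i.castSucc := by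
  induction p with
  | zero => exact i.elim0
  | succ p ih =>
    rw [Finset.sum_filter, Fin.sum_univ_castSucc]
    induction i using Fin.lastCases with
    | last => simp [Fin.last_le_iff, (Fin.castSucc_lt_last _).ne]
    | cast i =>
      have h := ih (fun j => v j.castSucc) i
      rw [Finset.sum_filter] at h
      simp only [Fin.castSucc_le_castSucc_iff, Fin.le_last, if_true, Fin.succ_castSucc, h,
        Fin.succ_last]
      ring

/-- The integrand expressing a coefficient of `I*` as an integral over a simplex. -/
noncomputable def starIntegrand {N p : ℕ} (idx : Fin p → Fin N) (b : Fin p → ℝ)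
    (d : Fin N →₀ ℕ) (s : Fin p → ℝ) : ℝ :=
  (∏ i, (b i - s i)⁻¹) *
    expLinear (∑ i, MvPolynomial.C (-Real.log (s i)) * MvPolynomial.X (idx i)) d

lemma starIntegrand_eq_sum {N p : ℕ} (idx : Fin p → Fin N) (b : Fin p → ℝ) (d : Fin N →₀ ℕ)
    (s : Fin p → ℝ) :
    starIntegrand idx b d s = ∑ ν ∈ Finset.piAntidiag Finset.univ d.degree,
      blockIntegrand b ν 1 s * MvPolynomial.coeff d (∏ j : Fin p,
        (∑ i ∈ Finset.univ.filter (fun i : Fin p => i ≤ j),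
          MvPolynomial.X (idx i) : MvPolynomial (Fin N) ℝ) ^ (ν j)) := by
  set v : Fin (p + 1) → ℝ := fun i => Real.log ((Fin.snoc s 1 : Fin (p + 1) → ℝ) i) with hv
  have hlin : ∑ i, MvPolynomial.C (-Real.log (s i)) * MvPolynomial.X (idx i) =
      ∑ j : Fin p, MvPolynomial.C (v j.succ - v j.castSucc) *
        (∑ i ∈ Finset.univ.filter (fun i : Fin p => i ≤ j),
          MvPolynomial.X (idx i) : MvPolynomial (Fin N) ℝ) := by
    simp_rw [Finset.mul_sum, Finset.sum_filter]
    rw [Finset.sum_comm]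
    refine Finset.sum_congr rfl fun i _ => ?_
    rw [← Finset.sum_filter, ← Finset.sum_mul, ← map_sum, sum_filter_le_sub]
    simp [hv]
  rw [starIntegrand, expLinear, hlin, ← sum_piAntidiag_coeff, Finset.mul_sum]
  refine Finset.sum_congr rfl fun ν _ => ?_
  rw [blockIntegrand, Finset.prod_mul_distrib, mul_assoc]
  simp [logKernel, hv]

lemma integrableOn_logKernel (m : ℕ) :
    IntegrableOn (fun t => logKernel m t 1) (Set.Ioo 0 1) := by
  have hr : IntegrableOn (fun t : ℝ => 2 ^ m * t ^ (-(1 / 2) : ℝ)) (Set.Ioo 0 1) := by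
    have h := (intervalIntegral.intervalIntegrable_rpow' (a := 0) (b := 1)
      (r := (-(1 / 2) : ℝ)) (by norm_num)).const_mul (2 ^ m)
    rw [intervalIntegrable_iff_integrableOn_Ioo_of_le zero_le_one] at h
    exact h
  refine hr.mono' ((measurable_logKernel m).comp measurable_prodMk_right).aestronglyMeasurable ?_
  refine (ae_restrict_mem measurableSet_Ioo).mono fun t ht => ?_
  have hlog : 0 ≤ -Real.log t / 2 := by
    have := Real.log_nonpos ht.1.le ht.2.le
    linarith
  rw [Real.norm_of_nonneg (logKernel_nonneg m ht.1 ht.2.le), logKernel, Real.log_one,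
    Real.rpow_def_of_pos ht.1]
  have h := Real.pow_div_factorial_le_exp (-Real.log t / 2) hlog m
  calc (0 - Real.log t) ^ m / m.factorial
      = 2 ^ m * ((-Real.log t / 2) ^ m / m.factorial) := by
        rw [div_pow]
        field_simp
        ring
    _ ≤ 2 ^ m * Real.exp (-Real.log t / 2) := by gcongr
    _ = _ := by
      congr 2
      ring

lemma integrableOn_blockIntegrand {p : ℕ} {b : Fin p → ℝ} (hb : ∀ i, 1 < b i) (ν : Fin p → ℕ) :
    IntegrableOn (blockIntegrand b ν 1) (openSimplex p 1) := by
  have hbound : Integrable (fun s : Fin p → ℝ => ∏ i, (Set.Ioo (0 : ℝ) 1).indicator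
      (fun t => (b i - 1)⁻¹ * logKernel (ν i) t 1) (s i)) :=
    Integrable.fintype_prod fun i =>
      (integrable_indicator_iff measurableSet_Ioo).2 ((integrableOn_logKernel (ν i)).const_mul _)
  refine hbound.integrableOn.mono' (Finset.measurable_fun_prod _ fun i _ =>
      measurable_blockFactor b ν 1 i).aestronglyMeasurable ?_
  refine (ae_restrict_mem (measurableSet_openSimplex p 1)).mono fun s hs => ?_
  rw [blockIntegrand, Real.norm_of_nonneg
    (Finset.prod_nonneg fun i _ => blockFactor_nonneg hb ν hs i)]
  refine Finset.prod_le_prod (fun i _ => blockFactor_nonneg hb ν hs i) fun i _ => ?_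
  rw [Set.indicator_of_mem (hs.2 i)]
  have hmono := (strictMono_snoc_iff s 1).2 ⟨hs.1, fun j => (hs.2 j).2⟩
  have hlt := hmono (Fin.castSucc_lt_succ (i := i))
  have hle := hmono.monotone (Fin.le_last i.succ)
  rw [Fin.snoc_castSucc] at hlt
  rw [Fin.snoc_last] at hle
  have hpos := (hs.2 i).1.trans hlt
  refine mul_le_mul ?_ ?_ (logKernel_nonneg _ (hs.2 i).1 hlt.le)
    (inv_nonneg.2 (sub_nonneg.2 (hb i).le))
  · exact inv_anti₀ (sub_pos.2 (hb i)) (sub_le_sub_left (hs.2 i).2.le _)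
  · unfold logKernel
    have h1 := Real.log_le_log (hs.2 i).1 hlt.le
    have h2 := Real.log_le_log hpos hle
    gcongr

lemma integrableOn_starIntegrand {N p : ℕ} (idx : Fin p → Fin N) {b : Fin p → ℝ}
    (hb : ∀ i, 1 < b i) (d : Fin N →₀ ℕ) :
    IntegrableOn (starIntegrand idx b d) (openSimplex p 1) := by
  rw [funext (starIntegrand_eq_sum idx b d)]
  exact integrable_finsetSum _ fun ν _ => (integrableOn_blockIntegrand hb ν).mul_const _

lemma Istar_apply {N p : ℕ} (idx : Fin p → Fin N) {b : Fin p → ℝ}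
    (hb : ∀ i, 1 < b i) (d : Fin N →₀ ℕ) :
    Istar N p idx b d = ∫ s in openSimplex p 1, starIntegrand idx b d s := by
  rw [funext (starIntegrand_eq_sum idx b d),
    integral_finsetSum _ fun ν _ => (integrableOn_blockIntegrand hb ν).mul_const _, Istar,
    tsum_eq_sum (s := Finset.piAntidiag Finset.univ d.degree)]
  · refine Finset.sum_congr rfl fun ν _ => ?_
    rw [integral_mul_const, iterInt_eq_integral_blockIntegrand hb]
  · intro ν hν
    rw [MvPolynomial.IsHomogeneous.coeff_eq_zero (n := ∑ j, ν j), mul_zero]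
    · refine MvPolynomial.IsHomogeneous.prod _ _ _ fun j _ => ?_
      simpa using (MvPolynomial.IsHomogeneous.sum _ _ 1 fun i _ =>
        MvPolynomial.isHomogeneous_X ℝ (idx i)).pow (ν j)
    · intro h
      exact hν (Finset.mem_piAntidiag.2 ⟨h.symm, fun i _ => Finset.mem_univ i⟩)

/-- Splitting a vector into its first `k` and its last `l` entries. -/
noncomputable def splitEquiv (k l : ℕ) : (Fin (k + l) → ℝ) ≃ᵐ (Fin k → ℝ) × (Fin l → ℝ) :=
  (MeasurableEquiv.arrowCongr' finSumFinEquiv.symm (MeasurableEquiv.refl ℝ)).trans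
    (MeasurableEquiv.sumPiEquivProdPi fun _ => ℝ)

lemma splitEquiv_apply (k l : ℕ) (r : Fin (k + l) → ℝ) :
    splitEquiv k l r = (fun i => r (Fin.castAdd l i), fun i => r (Fin.natAdd k i)) := rfl

lemma measurePreserving_splitEquiv (k l : ℕ) : MeasurePreserving (splitEquiv k l) :=
  (volume_preserving_arrowCongr' finSumFinEquiv.symm (MeasurableEquiv.refl ℝ)
    (MeasurePreserving.id _)).trans (volume_measurePreserving_sumPiEquivProdPi fun _ => ℝ)

lemma ae_injective (n : ℕ) : ∀ᵐ r : Fin n → ℝ, Function.Injective r := by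
  have h : ∀ i j : Fin n, i ≠ j → ∀ᵐ r : Fin n → ℝ, r i ≠ r j := by
    intro i j hij
    have h0 := Measure.addHaar_submodule (volume : Measure (Fin n → ℝ))
      (LinearMap.ker (LinearMap.proj (R := ℝ) (φ := fun _ : Fin n => ℝ) i - LinearMap.proj j)) ?_
    · rw [ae_iff]
      refine measure_mono_null (fun r hr => ?_) h0
      simpa [sub_eq_zero] using hr
    · intro htop
      have hmem : Pi.single i (1 : ℝ) ∈ LinearMap.ker
          (LinearMap.proj (R := ℝ) (φ := fun _ : Fin n => ℝ) i - LinearMap.proj j) := by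
        rw [htop]
        trivial
      simp [hij.symm] at hmem
  have hall : ∀ᵐ r : Fin n → ℝ, ∀ i j : Fin n, i ≠ j → r i ≠ r j := by
    simp only [ae_all_iff]
    exact h
  exact hall.mono fun r hr i j hij => by_contra fun hne => hr i j hne hij

lemma mem_split_preimage_iff {k l : ℕ} {r : Fin (k + l) → ℝ} (hr : Function.Injective r) :
    r ∈ splitEquiv k l ⁻¹' (openSimplex k 1 ×ˢ openSimplex l 1) ↔
      r ∈ ⋃ σ ∈ shuffles (k + l) k, {r | r ∘ σ ∈ openSimplex (k + l) 1} := by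
  simp only [Set.mem_preimage, splitEquiv_apply, Set.mem_prod, Set.mem_iUnion, Set.mem_ofPred_eq,
    exists_prop, openSimplex, shuffles, Finset.mem_filter, Finset.mem_univ, true_and,
    Function.comp_apply]
  constructor
  · rintro ⟨⟨h1, h2⟩, h3, h4⟩
    have hmono : StrictMono (r ∘ Tuple.sort r) :=
      (Tuple.monotone_sort r).strictMono_of_injective (hr.comp (Tuple.sort r).injective)
    have hlt : ∀ i j, r i < r j → (Tuple.sort r)⁻¹ i < (Tuple.sort r)⁻¹ j := fun i j hij => by
      rw [← hmono.lt_iff_lt]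
      simpa using hij
    have hIoo : ∀ j, r j ∈ Set.Ioo (0 : ℝ) 1 := fun j => Fin.addCases h2 h4 j
    refine ⟨Tuple.sort r, ⟨fun i j hij hjk => hlt i j ?_, fun i j hij hki => hlt i j ?_⟩,
      hmono, fun j => hIoo _⟩
    · exact @h1 ⟨i, hij.trans hjk⟩ ⟨j, hjk⟩ hij
    · induction i using Fin.addCases with
      | left i => exact absurd i.2 (not_lt.2 (by simpa using hki))
      | right i =>
        induction j using Fin.addCases with
        | left j => exact absurd j.2 (by simp at hij; omega)
        | right j => exact h3 (by simpa using hij)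
  · rintro ⟨σ, ⟨h1, h2⟩, h3, h4⟩
    have hlt : ∀ i j, σ⁻¹ i < σ⁻¹ j → r i < r j := fun i j hij => by
      simpa using h3 hij
    have hIoo : ∀ j, r j ∈ Set.Ioo (0 : ℝ) 1 := fun j => by
      simpa using h4 (σ⁻¹ j)
    exact ⟨⟨fun i j hij => hlt _ _ (h1 _ _ (by simpa using hij) (by simp)), fun j => hIoo _⟩,
      fun i j hij => hlt _ _ (h2 _ _ (by simpa using hij) (by simp)), fun j => hIoo _⟩

lemma starIntegrand_comp_perm {n : ℕ} (a : Fin n → ℝ) (d : Fin n →₀ ℕ) (σ : Equiv.Perm (Fin n))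
    (r : Fin n → ℝ) :
    starIntegrand (fun i => σ i) (fun i => a (σ i)) d (r ∘ σ) = starIntegrand id a d r := by
  unfold starIntegrand
  simp only [Function.comp_apply, id_eq]
  rw [Equiv.prod_comp σ fun i => (a i - r i)⁻¹,
    Equiv.sum_comp σ fun i => MvPolynomial.C (-Real.log (r i)) * MvPolynomial.X i]

lemma measurePreserving_comp_perm {n : ℕ} (σ : Equiv.Perm (Fin n)) :
    MeasurePreserving (MeasurableEquiv.arrowCongr' σ.symm (MeasurableEquiv.refl ℝ)) :=
  volume_preserving_arrowCongr' σ.symm (MeasurableEquiv.refl ℝ) (MeasurePreserving.id _)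

lemma comp_perm_preimage {n : ℕ} (σ : Equiv.Perm (Fin n)) :
    MeasurableEquiv.arrowCongr' σ.symm (MeasurableEquiv.refl ℝ) ⁻¹' openSimplex n 1 =
      {r | r ∘ σ ∈ openSimplex n 1} := rfl

lemma Istar_perm_apply {n : ℕ} {a : Fin n → ℝ} (ha : ∀ i, 1 < a i) (d : Fin n →₀ ℕ)
    (σ : Equiv.Perm (Fin n)) :
    Istar n n (fun i => σ i) (fun i => a (σ i)) d =
      ∫ r in {r | r ∘ σ ∈ openSimplex n 1}, starIntegrand id a d r := by
  rw [Istar_apply _ (fun i => ha _),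
    ← (measurePreserving_comp_perm σ).setIntegral_preimage_emb
      (MeasurableEquiv.measurableEmbedding _), comp_perm_preimage]
  exact integral_congr_ae (.of_forall fun r => starIntegrand_comp_perm a d σ r)

lemma integrableOn_comp_perm {n : ℕ} {a : Fin n → ℝ} (ha : ∀ i, 1 < a i) (d : Fin n →₀ ℕ)
    (σ : Equiv.Perm (Fin n)) :
    IntegrableOn (starIntegrand id a d) {r | r ∘ σ ∈ openSimplex n 1} := by
  have h := ((measurePreserving_comp_perm σ).integrableOn_comp_preimage
    (MeasurableEquiv.measurableEmbedding _)).2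
    (integrableOn_starIntegrand (fun i => σ i) (fun i => ha (σ i)) d)
  rw [comp_perm_preimage] at h
  exact h.congr (.of_forall fun r => starIntegrand_comp_perm a d σ r)

lemma disjoint_comp_perm {n : ℕ} {σ τ : Equiv.Perm (Fin n)} (hστ : σ ≠ τ) :
    Disjoint {r : Fin n → ℝ | r ∘ σ ∈ openSimplex n 1} {r | r ∘ τ ∈ openSimplex n 1} := by
  refine Set.disjoint_left.2 fun r h1 h2 => hστ ?_
  have hinj : Function.Injective r := by
    have h := h1.1.injective.comp σ.symm.injective
    rwa [Function.comp_assoc, Equiv.self_comp_symm, Function.comp_id] at h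
  have heq := Tuple.unique_monotone h1.1.monotone h2.1.monotone
  exact Equiv.ext fun i => hinj (congrFun heq i)

lemma isHomogeneous_linearForm {N p : ℕ} (c : Fin p → ℝ) (idx : Fin p → Fin N) :
    (∑ i, MvPolynomial.C (c i) * MvPolynomial.X (idx i) : MvPolynomial (Fin N) ℝ).IsHomogeneous 1 :=
  MvPolynomial.IsHomogeneous.sum _ _ 1 fun _ _ => MvPolynomial.isHomogeneous_C_mul_X _ _

lemma sum_antidiagonal_starIntegrand {k l : ℕ} (a : Fin (k + l) → ℝ) (d : Fin (k + l) →₀ ℕ)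
    (r : Fin (k + l) → ℝ) :
    ∑ e ∈ Finset.HasAntidiagonal.antidiagonal d,
      starIntegrand (Fin.castAdd l) (fun i => a (Fin.castAdd l i)) e.1 (splitEquiv k l r).1 *
        starIntegrand (Fin.natAdd k) (fun i => a (Fin.natAdd k i)) e.2 (splitEquiv k l r).2 =
      starIntegrand id a d r := by
  unfold starIntegrand
  rw [Fin.prod_univ_add, Fin.sum_univ_add, expLinear_add_apply (isHomogeneous_linearForm _ _)
    (isHomogeneous_linearForm _ _), Finset.mul_sum]
  refine Finset.sum_congr rfl fun e _ => ?_
  rw [splitEquiv_apply]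
  simp only [id_eq]
  ring

/-- The shuffle product formula for the generating series `I*`:
`I*(a_1:⋯:a_k:1|t_1,…,t_k) · I*(a_{k+1}:⋯:a_n:1|t_{k+1},…,t_n)
  = Σ_{σ ∈ Σ_{k,l}} I*(a_{σ(1)}:⋯:a_{σ(n)}:1|t_{σ(1)},…,t_{σ(n)})`, `n = k + l`. -/
theorem stmt1 (k l : ℕ) (hk : 1 ≤ k) (hl : 1 ≤ l)
    (a : Fin (k + l) → ℝ) (ha : ∀ i, 1 < a i) :
    Istar (k + l) k (Fin.castAdd l) (fun i => a (Fin.castAdd l i)) *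
      Istar (k + l) l (Fin.natAdd k) (fun i => a (Fin.natAdd k i)) =
    ∑ σ ∈ shuffles (k + l) k,
      Istar (k + l) (k + l) (fun i => σ i) (fun i => a (σ i)) := by
  ext d
  have hsum : ∀ (s : Finset (Equiv.Perm (Fin (k + l))))
      (f : Equiv.Perm (Fin (k + l)) → MvPowerSeries (Fin (k + l)) ℝ),
      MvPowerSeries.coeff d (∑ σ ∈ s, f σ) = ∑ σ ∈ s, f σ d := fun s f => map_sum _ _ _
  have hmul : MvPowerSeries.coeff d
      (Istar (k + l) k (Fin.castAdd l) (fun i => a (Fin.castAdd l i)) *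
        Istar (k + l) l (Fin.natAdd k) (fun i => a (Fin.natAdd k i))) =
      ∑ e ∈ Finset.HasAntidiagonal.antidiagonal d,
        Istar (k + l) k (Fin.castAdd l) (fun i => a (Fin.castAdd l i)) e.1 *
          Istar (k + l) l (Fin.natAdd k) (fun i => a (Fin.natAdd k i)) e.2 :=
    MvPowerSeries.coeff_mul _ _ _
  have hint : ∀ e : (Fin (k + l) →₀ ℕ) × (Fin (k + l) →₀ ℕ), IntegrableOn
      (fun z : (Fin k → ℝ) × (Fin l → ℝ) =>
        starIntegrand (Fin.castAdd l) (fun i => a (Fin.castAdd l i)) e.1 z.1 *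
          starIntegrand (Fin.natAdd k) (fun i => a (Fin.natAdd k i)) e.2 z.2)
      (openSimplex k 1 ×ˢ openSimplex l 1) := fun e => by
    rw [IntegrableOn, Measure.volume_eq_prod, ← Measure.prod_restrict]
    exact (integrableOn_starIntegrand _ (fun i => ha _) _).mul_prod
      (integrableOn_starIntegrand _ (fun i => ha _) _)
  rw [hsum, hmul]
  simp_rw [Istar_perm_apply ha]
  rw [← integral_biUnion_finset, ← setIntegral_congr_set
    (s := splitEquiv k l ⁻¹' (openSimplex k 1 ×ˢ openSimplex l 1))]
  · simp_rw [Istar_apply (Fin.castAdd l) (fun i => ha (Fin.castAdd l i)),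
      Istar_apply (Fin.natAdd k) (fun i => ha (Fin.natAdd k i)), ← setIntegral_prod_mul]
    rw [← Measure.volume_eq_prod, ← integral_finsetSum _ fun e _ => hint e,
      ← (measurePreserving_splitEquiv k l).setIntegral_preimage_emb
        (splitEquiv k l).measurableEmbedding]
    simp_rw [sum_antidiagonal_starIntegrand]
  · exact (ae_injective (k + l)).mono fun r hr => propext (mem_split_preimage_iff hr)
  · intro σ _
    rw [← comp_perm_preimage]
    exact (MeasurableEquiv.measurable _) (measurableSet_openSimplex _ _)
  · exact fun σ _ τ _ hστ => disjoint_comp_perm hστ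
  · exact fun σ _ => integrableOn_comp_perm ha d σ
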